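/- Let F_q be a finite field with q ≥ n + k − 1 elements, and form the matrix A over the polynomial ring F_q[X_1,…,X_n]. Suppose det(A) is not the zero polynomial. Then there exist pairwise distinct elements α*_1,…,α*_n ∈ F_q such that the k×n matrix G over F_q defined by G_{i,j} = f_i(α*_j) = ∏_{t∈Z_i}(α*_j − α*_t) generates an [n,k] MDS code, i.e., every set of k columns of G is linearly independent. Moreover, G_{i,j} = 0 if and only if j ∈ Z_i. -/

import Mathlib

/-!
The points are chosen as a common non-root of two polynomials: `det A`, and the Vandermonde
determinant `V` of the indeterminates, whose non-vanishing says that the points are distinct.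

To find it over `F_q`, bound the degree of `det A * V` in each variable `X_t`. A determinant has
degree in `X_t` at most the sum of the degrees of its rows (`degreeOf_det_le`). Hence `V` has degree
at most `n - 1`, and `det A` at most the number of `i` with `t ∈ Z i`. That number is at most `k - 1`:
if `t` were in every `Z i`, then every `f_i` would vanish at `X_t`, so `A` would kill the vector
of powers of `X_t` and `det A = 0` (`exists_notMem_of_det_ne_zero`). The total, `n + k - 2`, is
less than `q`, so the nonzero polynomial `det A * V` does not vanish identically on `F_q ^ n`.

At such a point `α`, the `j`-th column of `G` is `A(α)` applied to the vector
`(1, α_j, …, α_j^(k-1))`. Any `k` of these vectors are independent (Vandermonde) and `A(α)` is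
invertible, which is the MDS property.
-/

open Polynomial MvPolynomial

/-- The coefficient matrix `A = (a_{i,j})` where
`f_i(x) = ∏_{t ∈ Z i} (x - X_t) = ∑_{j=1}^k a_{i,j} x^{j-1}`
(with `0`-based index `j`, `a i j` is the coefficient of `x^j` in `f i`). -/
noncomputable def coeffMatrix (F : Type*) [Field F] (n k : ℕ)
    (Z : Fin k → Finset (Fin n)) : Matrix (Fin k) (Fin k) (MvPolynomial (Fin n) F) :=
  Matrix.of fun i j =>
    (∏ t ∈ Z i, (Polynomial.X - Polynomial.C (MvPolynomial.X t) :
        Polynomial (MvPolynomial (Fin n) F))).coeff (j : ℕ)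

lemma degreeOf_det_le {F : Type*} [Field F] {σ : Type*} {m : ℕ} (t : σ)
    (M : Matrix (Fin m) (Fin m) (MvPolynomial σ F)) (b : Fin m → ℕ)
    (h : ∀ i j, degreeOf t (M i j) ≤ b i) : degreeOf t M.det ≤ ∑ i, b i := by
  rw [← Matrix.det_transpose, Matrix.det_apply]
  refine (degreeOf_sum_le _ _ _).trans (Finset.sup_le fun τ _ => ?_)
  have key : degreeOf t (∏ i, M.transpose (τ i) i) ≤ ∑ i, b i :=
    (degreeOf_prod_le _ _ _).trans (Finset.sum_le_sum fun i _ => h _ _)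
  rcases Int.units_eq_one_or (Equiv.Perm.sign τ) with hs | hs
  · simpa [hs] using key
  · rw [hs, Units.neg_smul, one_smul, degreeOf_neg]
    exact key

lemma degreeOf_coeff_prod_le {F : Type*} [Field F] {n : ℕ} (t : Fin n) (s : Finset (Fin n)) :
    ∀ j : ℕ, degreeOf t ((∏ u ∈ s, (Polynomial.X - Polynomial.C (MvPolynomial.X u) :
        Polynomial (MvPolynomial (Fin n) F))).coeff j) ≤ ∑ u ∈ s, if t = u then 1 else 0 := by
  induction s using Finset.induction_on with
  | empty =>
    intro j
    rw [Finset.prod_empty, Polynomial.coeff_one]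
    split_ifs <;> simp
  | insert a s ha ih =>
    intro j
    rw [Finset.prod_insert ha, Finset.sum_insert ha, sub_mul, Polynomial.coeff_sub,
      Polynomial.coeff_C_mul]
    refine (degreeOf_sub_le _ _ _).trans (max_le ?_ ?_)
    · cases j with
      | zero => simp
      | succ j => rw [Polynomial.coeff_X_mul]; exact (ih j).trans (Nat.le_add_left _ _)
    · refine (degreeOf_mul_le _ _ _).trans (add_le_add ?_ (ih j))
      rw [degreeOf_X]

/-- Evaluating `f = ∏_{u ∈ s} (x - c u)`, of degree less than `k`, through its coefficients. -/
lemma sum_coeff_prod_mul_pow {R ι : Type*} [CommRing R] [Nontrivial R] {k : ℕ} (s : Finset ι)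
    (c : ι → R) (hs : s.card < k) (x : R) :
    ∑ j : Fin k, (∏ u ∈ s, (Polynomial.X - Polynomial.C (c u))).coeff (j : ℕ) * x ^ (j : ℕ) =
      ∏ u ∈ s, (x - c u) := by
  refine (Fin.sum_univ_eq_sum_range
    (fun j => (∏ u ∈ s, (Polynomial.X - Polynomial.C (c u))).coeff j * x ^ j) k).trans ?_
  rw [← Polynomial.eval_eq_sum_range' (by rwa [Polynomial.natDegree_finsetProd_X_sub_C_eq_card]) x,
    Polynomial.eval_prod]
  simp

/-- If `t` lay in every `Z i`, the nonzero vector of powers of `X_t` would be in the kernel of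
the coefficient matrix. -/
lemma exists_notMem_of_det_ne_zero {F : Type*} [Field F] {n k : ℕ} (hk : 1 ≤ k)
    (Z : Fin k → Finset (Fin n)) (hZ : ∀ i, (Z i).card = k - 1)
    (hdet : (coeffMatrix F n k Z).det ≠ 0) (t : Fin n) : ∃ i, t ∉ Z i := by
  by_contra! hall
  have hker : (coeffMatrix F n k Z).mulVec
      (fun j : Fin k => (MvPolynomial.X t : MvPolynomial (Fin n) F) ^ (j : ℕ)) = 0 := by
    funext i
    have hlt : (Z i).card < k := by have := hZ i; omega
    exact (sum_coeff_prod_mul_pow (Z i)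
      (fun u => (MvPolynomial.X u : MvPolynomial (Fin n) F)) hlt (MvPolynomial.X t)).trans
        (Finset.prod_eq_zero (hall i) (sub_self _))
  have h0 := congrFun (Matrix.eq_zero_of_mulVec_eq_zero hdet hker) ⟨0, hk⟩
  simp at h0

lemma degreeOf_det_coeffMatrix_le {F : Type*} [Field F] {n k : ℕ} (hk : 1 ≤ k)
    (Z : Fin k → Finset (Fin n)) (hZ : ∀ i, (Z i).card = k - 1)
    (hdet : (coeffMatrix F n k Z).det ≠ 0) (t : Fin n) :
    degreeOf t (coeffMatrix F n k Z).det ≤ k - 1 := by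
  obtain ⟨i₀, hi₀⟩ := exists_notMem_of_det_ne_zero hk Z hZ hdet t
  refine (degreeOf_det_le t _ (fun i => ∑ u ∈ Z i, if t = u then 1 else 0)
    fun i j => degreeOf_coeff_prod_le t (Z i) j).trans ?_
  simp only [Finset.sum_ite_eq]
  rw [← Finset.card_filter]
  have hlt : (Finset.univ.filter fun i => t ∈ Z i).card < (Finset.univ : Finset (Fin k)).card :=
    Finset.card_lt_card (Finset.filter_ssubset.2 ⟨i₀, Finset.mem_univ _, hi₀⟩)
  rw [Finset.card_univ, Fintype.card_fin] at hlt
  omega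

lemma degreeOf_det_vandermonde_le {F : Type*} [Field F] {n : ℕ} (t : Fin n) :
    degreeOf t (Matrix.vandermonde (fun i => (MvPolynomial.X i : MvPolynomial (Fin n) F))).det
      ≤ n - 1 := by
  refine (degreeOf_det_le t _ (fun i => if t = i then n - 1 else 0) fun i j => ?_).trans (by simp)
  rw [Matrix.vandermonde_apply]
  refine (degreeOf_pow_le _ _ _).trans ?_
  rw [degreeOf_X]
  split_ifs
  · omega
  · simp

/-- If the specialization of the coefficient matrix at distinct points `α` is invertible, then any
`k` columns of `G` are its images of independent Vandermonde vectors. -/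
lemma linearIndependent_columns {F : Type*} [Field F] {n k : ℕ} (hk : 1 ≤ k)
    (Z : Fin k → Finset (Fin n)) (hZ : ∀ i, (Z i).card = k - 1) (α : Fin n → F)
    (hα : Function.Injective α) (hdet : MvPolynomial.eval α (coeffMatrix F n k Z).det ≠ 0)
    (s : Finset (Fin n)) (hs : s.card = k) :
    LinearIndependent F (fun j : s =>
      (fun i : Fin k => ∏ t ∈ Z i, (α (j : Fin n) - α t))) := by
  set B : Matrix (Fin k) (Fin k) F := (MvPolynomial.eval α).mapMatrix (coeffMatrix F n k Z) with hB
  have hBdet : B.det ≠ 0 := by rwa [hB, ← RingHom.map_det]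
  have hBij : ∀ i j, B i j =
      (∏ u ∈ Z i, (Polynomial.X - Polynomial.C (α u))).coeff (j : ℕ) := by
    intro i j
    rw [hB, RingHom.mapMatrix_apply, Matrix.map_apply, coeffMatrix, Matrix.of_apply,
      ← Polynomial.coeff_map, Polynomial.map_prod]
    simp
  have hcol : (fun j : s => (fun i : Fin k => ∏ t ∈ Z i, (α (j : Fin n) - α t))) =
      B.mulVecLin ∘ fun j : s => fun l : Fin k => α (j : Fin n) ^ (l : ℕ) := by
    funext j i
    have hlt : (Z i).card < k := by have := hZ i; omega
    rw [← sum_coeff_prod_mul_pow (Z i) α hlt]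
    simp only [Function.comp_apply, Matrix.mulVecLin_apply, Matrix.mulVec, dotProduct, hBij]
  rw [hcol]
  refine LinearIndependent.map' ?_ _ ?_
  · let e : Fin k ≃ s := (s.equivFinOfCardEq hs).symm
    rw [← linearIndependent_equiv e]
    have hV : (Matrix.vandermonde fun i : Fin k => α (e i : Fin n)).det ≠ 0 :=
      Matrix.det_vandermonde_ne_zero_iff.2
        (hα.comp (Subtype.val_injective.comp e.injective))
    exact Matrix.linearIndependent_rows_of_det_ne_zero hV
  · rw [LinearMap.ker_eq_bot']
    intro v hv
    exact Matrix.eq_zero_of_mulVec_eq_zero hBdet hv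

/-- If `det A` is not the zero polynomial and `q ≥ n + k - 1`, then there exist pairwise
distinct evaluation points `α*_1, …, α*_n ∈ F_q` such that the matrix
`G_{i,j} = ∏_{t ∈ Z i} (α*_j - α*_t)` generates an `[n,k]` MDS code and has support
exactly the complement of the `Z i`'s. -/
theorem exists_evaluation_points (F : Type*) [Field F] [Fintype F] (n k : ℕ)
    (hk : 1 ≤ k) (hkn : k ≤ n) (hq : n + k - 1 ≤ Fintype.card F)
    (Z : Fin k → Finset (Fin n)) (hZ : ∀ i, (Z i).card = k - 1)
    (hdet : (coeffMatrix F n k Z).det ≠ 0) :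
    ∃ α : Fin n → F, Function.Injective α ∧
      (∀ s : Finset (Fin n), s.card = k →
        LinearIndependent F (fun j : s =>
          (fun i : Fin k => ∏ t ∈ Z i, (α (j : Fin n) - α t)))) ∧
      (∀ i : Fin k, ∀ j : Fin n, (∏ t ∈ Z i, (α j - α t)) = 0 ↔ j ∈ Z i) := by
  set V := (Matrix.vandermonde (fun i => (MvPolynomial.X i : MvPolynomial (Fin n) F))).det with hV
  have hV0 : V ≠ 0 := Matrix.det_vandermonde_ne_zero_iff.2 (MvPolynomial.X_injective)
  obtain ⟨α, hα⟩ : ∃ α : Fin n → F,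
      MvPolynomial.eval α ((coeffMatrix F n k Z).det * V) ≠ 0 := by
    by_contra! hzero
    refine mul_ne_zero hdet hV0
      (eq_zero_of_eval_zero_at_prod_finset _ (fun _ => Finset.univ) (fun t => ?_)
        fun x _ => hzero x)
    have h1 := degreeOf_det_coeffMatrix_le hk Z hZ hdet t
    have h2 : degreeOf t V ≤ n - 1 := degreeOf_det_vandermonde_le t
    have h3 := degreeOf_mul_le t (coeffMatrix F n k Z).det V
    rw [Finset.card_univ]
    omega
  rw [map_mul] at hα
  have hinj : Function.Injective α := by
    have hVα := right_ne_zero_of_mul hα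
    rw [hV, RingHom.map_det] at hVα
    refine Matrix.det_vandermonde_ne_zero_iff.1 ?_
    convert hVα using 2
    ext i j
    simp [Matrix.vandermonde_apply]
  refine ⟨α, hinj, linearIndependent_columns hk Z hZ α hinj (left_ne_zero_of_mul hα),
    fun i j => ?_⟩
  rw [Finset.prod_eq_zero_iff]
  constructor
  · rintro ⟨t, ht, h⟩
    rwa [hinj (sub_eq_zero.1 h)]
  · exact fun h => ⟨j, h, sub_self _⟩
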